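/- Let M be a left locally Gaussian monoid and E ⊆ M∖{1} a generating set closed under llcm and left-complement. Then for every x ∈ M∖{1}, the length p of the E-normal form x = x_p⋯x_1 equals the word length N_E(x), i.e., the least number of elements of E whose product is x. -/

import Mathlib

/-- `x` left-divides `y`: `y = x·z` for some `z`. -/
def LDvd {M : Type*} [Monoid M] (x y : M) : Prop := ∃ z, y = x * z

/-- `y` right-divides `x`: `x = z·y` for some `z`. -/
def RDvd {M : Type*} [Monoid M] (y x : M) : Prop := ∃ z, x = z * y

/-- `c` is a common left-multiple of `a` and `b`. -/
def IsCLM {M : Type*} [Monoid M] (a b c : M) : Prop := RDvd a c ∧ RDvd b c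

/-- `c` is a least common left-multiple (llcm) of `a` and `b`: a common left-multiple
that right-divides every common left-multiple. -/
def IsLLCM {M : Type*} [Monoid M] (a b c : M) : Prop :=
  IsCLM a b c ∧ ∀ d, IsCLM a b d → RDvd c d

/-- `M` is right-cancellative. -/
def RightCancellative (M : Type*) [Monoid M] : Prop :=
  ∀ a b c : M, a * c = b * c → a = b

/-- `M` is left-noetherian: there is no infinite strictly descending chain with respect
to proper left-divisibility. -/
def LeftNoetherian (M : Type*) [Monoid M] : Prop :=
  ¬ ∃ f : ℕ → M, ∀ k, LDvd (f (k + 1)) (f k) ∧ f (k + 1) ≠ f k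

/-- `M` is left locally Gaussian: right-cancellative, left-noetherian, and any two
elements admitting a common left-multiple admit a least common left-multiple. -/
def LeftLocallyGaussian (M : Type*) [Monoid M] : Prop :=
  RightCancellative M ∧ LeftNoetherian M ∧
  ∀ a b : M, (∃ c, IsCLM a b c) → ∃ c, IsLLCM a b c

/-- `E` is a generating set of the monoid `M`. -/
def IsGenSet {M : Type*} [Monoid M] (E : Set M) : Prop :=
  ∀ m : M, ∃ l : List M, (∀ x ∈ l, x ∈ E) ∧ l.prod = m

/-- `E` is closed under least common left-multiples. -/
def ClosedLLCM {M : Type*} [Monoid M] (E : Set M) : Prop :=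
  ∀ x ∈ E, ∀ y ∈ E, ∀ c, IsLLCM x y c → c ∈ E

/-- `E` is closed under left-complements: if `c = llcm(x,y)` and `c = w·y`, then the
left-complement `w = x/y` lies in `E ∪ {1}`. -/
def ClosedLComp {M : Type*} [Monoid M] (E : Set M) : Prop :=
  ∀ x ∈ E, ∀ y ∈ E, ∀ c w, IsLLCM x y c → c = w * y → (w ∈ E ∨ w = 1)

/-- `x ⊲_E y`: every right-divisor of `x·y` lying in `E` right-divides `y`. -/
def Tri {M : Type*} [Monoid M] (E : Set M) (x y : M) : Prop :=
  ∀ d ∈ E, RDvd d (x * y) → RDvd d y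

/-- The list `[x_p, …, x_1]` is an `E`-normal sequence: all entries lie in `E` and
`x_{i+1} ⊲_E x_i` for all `i`. -/
def ENormalSeq {M : Type*} [Monoid M] (E : Set M) (l : List M) : Prop :=
  (∀ a ∈ l, a ∈ E) ∧ l.Chain' (Tri E)

/-- The word length of `m` with respect to `E`: the least `n` such that `m` is a
product of `n` elements of `E`. -/
noncomputable def wordLength {M : Type*} [Monoid M] (E : Set M) (m : M) : ℕ :=
  sInf {n | ∃ l : List M, (∀ x ∈ l, x ∈ E) ∧ l.length = n ∧ l.prod = m}

/-- A left-divisor of `1` in a left-noetherian monoid is trivial. -/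
theorem LeftNoetherian.eq_one_of_mul_eq_one {M : Type*} [Monoid M] (hN : LeftNoetherian M)
    {a b : M} (hab : a * b = 1) : a = 1 := by
  by_contra ha
  refine hN ⟨fun k => if Even k then 1 else a, fun k => ?_⟩
  by_cases hk : Even k
  · have hk' : ¬ Even (k + 1) := by simpa [Nat.even_add_one] using hk
    simp only [hk, hk', if_true, if_false]
    exact ⟨⟨b, hab.symm⟩, ha⟩
  · have hk' : Even (k + 1) := by simpa [Nat.even_add_one] using hk
    simp only [hk, hk', if_true, if_false]
    exact ⟨⟨a, (one_mul a).symm⟩, fun h => ha h.symm⟩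

/-- A common left-multiple `z * u = a * d` of two elements of `E` factors through the
left-complement `w = d / u`. -/
theorem exists_leftComplement {M : Type*} [Monoid M] (hM : LeftLocallyGaussian M)
    {E : Set M} (hcc : ClosedLComp E) {d u z a : M} (hd : d ∈ E) (hu : u ∈ E)
    (h : z * u = a * d) :
    ∃ w v t, (w ∈ E ∨ w = 1) ∧ w * u = v * d ∧ z = t * w := by
  obtain ⟨hcan, -, hlcm⟩ := hM
  obtain ⟨c, hc⟩ := hlcm d u ⟨z * u, ⟨a, h⟩, ⟨z, rfl⟩⟩
  obtain ⟨⟨v, hv⟩, ⟨w, hw⟩⟩ := hc.1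
  obtain ⟨t, ht⟩ := hc.2 (z * u) ⟨⟨a, h⟩, ⟨z, rfl⟩⟩
  refine ⟨w, v, t, hcc d hd u hu c w hc hw, hw.symm.trans hv, hcan _ _ u ?_⟩
  rw [ht, hw, mul_assoc]

/-- The left-complement of an element of `E ∪ {1}` by a product of elements of `E`
lies in `E ∪ {1}`. -/
theorem exists_leftComplement_prod {M : Type*} [Monoid M] (hM : LeftLocallyGaussian M)
    {E : Set M} (hcc : ClosedLComp E) (us : List M) (hus : ∀ b ∈ us, b ∈ E)
    {d z a : M} (hd : d ∈ E ∨ d = 1) (h : z * us.prod = a * d) :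
    ∃ w v t, (w ∈ E ∨ w = 1) ∧ w * us.prod = v * d ∧ z = t * w := by
  induction us using List.reverseRecOn generalizing d a with
  | nil => exact ⟨d, 1, a, hd, by simp, by simpa using h⟩
  | append_singleton us u ih =>
    rcases hd with hd | rfl
    · simp only [List.prod_append, List.prod_singleton, ← mul_assoc] at h ⊢
      obtain ⟨w₁, v₁, s, hw₁, hwv, hs⟩ :=
        exists_leftComplement hM hcc hd (hus u (by simp)) h
      obtain ⟨w, v, t, hw, hv, ht⟩ := ih (fun b hb => hus b (by simp [hb])) hw₁ hs
      exact ⟨w, v * v₁, t, hw, by rw [hv, mul_assoc, hwv, mul_assoc], ht⟩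
    · exact ⟨1, (us ++ [u]).prod, z, Or.inr rfl, by simp, by simp⟩

theorem ENormalSeq.of_append {M : Type*} [Monoid M] {E : Set M} {l l' : List M}
    (h : ENormalSeq E (l ++ l')) : ENormalSeq E l :=
  ⟨fun a ha => h.1 a (List.mem_append_left _ ha), (List.isChain_append.1 h.2).1⟩

/-- Every right-divisor in `E` of the product of an `E`-normal sequence right-divides its
last entry. -/
theorem ENormalSeq.rdvd_last {M : Type*} [Monoid M] (hM : LeftLocallyGaussian M)
    {E : Set M} (hcc : ClosedLComp E) {l : List M} {y d : M}
    (hl : ENormalSeq E (l ++ [y])) (hd : d ∈ E) (hdvd : RDvd d (l ++ [y]).prod) :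
    RDvd d y := by
  induction l using List.reverseRecOn generalizing y d with
  | nil => simpa using hdvd
  | append_singleton l x ih =>
    obtain ⟨a, ha⟩ := hdvd
    rw [List.prod_append, List.prod_singleton] at ha
    obtain ⟨w, v, t, hw, hwv, ht⟩ :=
      exists_leftComplement hM hcc hd (hl.1 y (by simp)) ha
    rcases hw with hw | rfl
    · obtain ⟨s, hs⟩ := ih hl.of_append hw ⟨t, ht⟩
      have hxy : Tri E x y := (List.isChain_append.1 hl.2).2.2 x (by simp) y (by simp)
      exact hxy d hd ⟨s * v, by rw [hs, mul_assoc, hwv, mul_assoc]⟩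
    · exact ⟨v, by simpa using hwv⟩

/-- An `E`-normal sequence whose product left-divides a product of elements of `E` is no
longer than that product. -/
theorem ENormalSeq.length_le {M : Type*} [Monoid M] (hM : LeftLocallyGaussian M)
    {E : Set M} (h1 : (1 : M) ∉ E) (hgen : IsGenSet E) (hcc : ClosedLComp E)
    {l m : List M} {u : M} (hl : ENormalSeq E l) (hm : ∀ b ∈ m, b ∈ E)
    (h : l.prod * u = m.prod) : l.length ≤ m.length := by
  induction m using List.reverseRecOn generalizing l u with
  | nil =>
    cases l with
    | nil => simp
    | cons a l =>
      refine absurd (hl.1 a (by simp)) ?_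
      rw [List.prod_cons, List.prod_nil, mul_assoc] at h
      rwa [hM.2.1.eq_one_of_mul_eq_one h]
  | append_singleton m d ih =>
    rcases List.eq_nil_or_concat' l with rfl | ⟨l, y, rfl⟩
    · simp
    rw [List.prod_append (l₁ := m), List.prod_singleton] at h
    obtain ⟨us, hus, rfl⟩ := hgen u
    obtain ⟨w, v, t, hw, hwv, ht⟩ :=
      exists_leftComplement_prod hM hcc us hus (Or.inl (hm d (by simp))) h
    have hwy : RDvd w y := by
      rcases hw with hw | rfl
      · exact hl.rdvd_last hM hcc hw ⟨t, ht⟩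
      · exact ⟨y, (mul_one y).symm⟩
    obtain ⟨s, hs⟩ := hwy
    have hts : l.prod * s = t := hM.1 _ _ w (by rw [← ht, mul_assoc, ← hs]; simp)
    have htv : t * v = m.prod :=
      hM.1 _ _ d (by rw [← h, ht, mul_assoc, mul_assoc, hwv])
    have := ih (u := s * v) hl.of_append (fun b hb => hm b (by simp [hb]))
      (by rw [← mul_assoc, hts, htv])
    simpa using this

/-- Let `M` be a left locally Gaussian monoid and `E ⊆ M∖{1}` a generating set closed
under llcm and left-complement. Then for every `x ≠ 1` the length of the `E`-normal
form of `x` equals the word length `N_E(x)`. -/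
theorem length_normalForm_eq_wordLength
    {M : Type*} [Monoid M] (hM : LeftLocallyGaussian M)
    (E : Set M) (h1 : (1 : M) ∉ E) (hgen : IsGenSet E)
    (hcl : ClosedLLCM E) (hcc : ClosedLComp E)
    (x : M) (hx : x ≠ 1) (l : List M)
    (hnf : ENormalSeq E l) (hprod : l.prod = x) :
    l.length = wordLength E x := by
  obtain ⟨m, hm, hlen, hmprod⟩ : wordLength E x ∈
      {n | ∃ l : List M, (∀ x ∈ l, x ∈ E) ∧ l.length = n ∧ l.prod = x} :=
    Nat.sInf_mem ⟨l.length, l, hnf.1, rfl, hprod⟩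
  refine le_antisymm ?_ (Nat.sInf_le ⟨l, hnf.1, rfl, hprod⟩)
  rw [← hlen]
  exact hnf.length_le hM h1 hgen hcc (u := 1) hm (by rw [mul_one, hprod, hmprod])
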